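/- Let K be a symmetric convex body in ℝ^n and let K_t, t in a nondegenerate interval I, be an SRS-movement of K with speed function β. Then for every real p ≥ 1 and every integer N ≥ n, the function t ↦ 𝔼 V_{K_t, N}^p is strictly convex on I if and only if β is not linear (not the restriction of a linear functional). -/

import Mathlib

open MeasureTheory Set
open scoped RealInnerProductSpace

noncomputable section

variable {E : Type*} [NormedAddCommGroup E] [InnerProductSpace ℝ E]

/-- Orthogonal projection `π_v` onto the hyperplane `v^⊥`. -/
def projPerp (v x : E) : E := x - (⟪x, v⟫ / ⟪v, v⟫) • v

/-- The family of sets `K_t = { x + t β(π_v(x)) v : x ∈ K }` underlying an RS-movement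
with direction `v` and speed function `β`. -/
def RSFamily (K : Set E) (v : E) (β : E → ℝ) (t : ℝ) : Set E :=
  (fun x => x + (t * β (projPerp v x)) • v) '' K

/-- A symmetric convex body `K` is SRS-decomposable if there are `ε > 0`, a direction
`v ≠ 0` and a speed function `β` which is odd on `π_v(K)` and is not the restriction of a
linear functional, such that `K_t` is convex for every `t ∈ (-ε, ε)`
(note `K_0 = K` automatically). -/
def IsSRSDecomposable (K : Set E) : Prop :=
  ∃ (v : E) (β : E → ℝ) (ε : ℝ), 0 < ε ∧ v ≠ 0 ∧
    (∀ x ∈ projPerp v '' K, β (-x) = -β x) ∧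
    (∀ t ∈ Set.Ioo (-ε) ε, Convex ℝ (RSFamily K v β t)) ∧
    ¬∃ ℓ : E →ₗ[ℝ] ℝ, ∀ x ∈ projPerp v '' K, β x = ℓ x

/-- A symmetric convex body: a compact convex set with nonempty interior with `K = -K`. -/
def IsSymConvexBody (K : Set E) : Prop :=
  IsCompact K ∧ Convex ℝ K ∧ (interior K).Nonempty ∧ K = -K

/-- `momentU n N K p = 𝔼 U_{K,N}^p`, the `p`-th moment of the normalized volume of the
convex hull of `N` independent uniform random points in `K ⊆ ℝⁿ`. -/
def momentU (n N : ℕ) (K : Set (EuclideanSpace ℝ (Fin n))) (p : ℝ) : ℝ :=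
  (∫ x : Fin N → EuclideanSpace ℝ (Fin n) in {x | ∀ i, x i ∈ K},
      ((volume (convexHull ℝ (Set.range x))).toReal / (volume K).toReal) ^ p) /
    (volume K).toReal ^ N

/-- `momentV n N K p = 𝔼 V_{K,N}^p`, the `p`-th moment of the normalized volume of the
symmetric convex hull `conv{±x₁, …, ±x_N}` of `N` independent uniform random points
in `K ⊆ ℝⁿ`. -/
def momentV (n N : ℕ) (K : Set (EuclideanSpace ℝ (Fin n))) (p : ℝ) : ℝ :=
  (∫ x : Fin N → EuclideanSpace ℝ (Fin n) in {x | ∀ i, x i ∈ K},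
      ((volume (convexHull ℝ (Set.range x ∪ -Set.range x))).toReal / (volume K).toReal) ^ p) /
    (volume K).toReal ^ N

/-!
Shearing a convex body along `v` by `t • γ` preserves volume, so up to a constant the moment is the
integral over `x ∈ Kᴺ` of the `p`-th power of the volume of the polytope spanned by the sheared
points `±(xᵢ + t γ(xᵢ) v)`. By Rogers and Shephard this volume is convex in `t`, since a line
parallel to `v` cuts the moving polytope in a segment whose length is convex in `t`; hence the
moment is convex. If `γ` is linear, the shear is a linear map of determinant one and the moment is
constant.

If `γ` is not linear, then for `t ≠ t₁` some points `xᵢ` of `K` fail to span the space after the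
shear by `t • γ` but span it after the shear by `t₁ • γ`. Otherwise `γ` would agree, on every
hyperplane complementary to `v`, with the linear functional interpolating it on a basis, and so be
linear on the interior of `K`; convexity of the sheared bodies extends this to the boundary. Near
such a tuple the polytope is almost flat at time `t` while its volume at time `t₁` is bounded below.
For `t` strictly between `t₁` and `t₂` this makes the convexity inequality strict on an open set of
tuples, so the moment is strictly convex.
-/

open scoped Pointwise

theorem volume_eq_ofReal_sSup_sub_sInf {A : Set ℝ} (hA : IsCompact A) (hA_convex : Convex ℝ A)
    (hA_ne : A.Nonempty) : volume A = ENNReal.ofReal (sSup A - sInf A) := by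
  conv_lhs => rw [eq_Icc_of_connected_compact ⟨hA_ne, hA_convex.isPreconnected⟩ hA]
  exact Real.volume_Icc

theorem volume_smul_add_smul {A B : Set ℝ} (hA : IsCompact A) (hA_convex : Convex ℝ A)
    (hA_ne : A.Nonempty) (hB : IsCompact B) (hB_convex : Convex ℝ B) (hB_ne : B.Nonempty)
    {a b : ℝ} (ha : 0 ≤ a) (hb : 0 ≤ b) :
    volume (a • A + b • B) = ENNReal.ofReal a * volume A + ENNReal.ofReal b * volume B := by
  have haA := hA.smul a
  have hbB := hB.smul b
  have hA_le := Real.sInf_le_sSup A hA.bddBelow hA.bddAbove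
  have hB_le := Real.sInf_le_sSup B hB.bddBelow hB.bddAbove
  rw [volume_eq_ofReal_sSup_sub_sInf hA hA_convex hA_ne,
    volume_eq_ofReal_sSup_sub_sInf hB hB_convex hB_ne,
    volume_eq_ofReal_sSup_sub_sInf (haA.add hbB) ((hA_convex.smul a).add (hB_convex.smul b))
      (hA_ne.smul_set.add hB_ne.smul_set),
    csSup_add hA_ne.smul_set haA.bddAbove hB_ne.smul_set hbB.bddAbove,
    csInf_add hA_ne.smul_set haA.bddBelow hB_ne.smul_set hbB.bddBelow,
    Real.sSup_smul_of_nonneg ha, Real.sSup_smul_of_nonneg hb, Real.sInf_smul_of_nonneg ha,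
    Real.sInf_smul_of_nonneg hb, ← ENNReal.ofReal_mul ha, ← ENNReal.ofReal_mul hb,
    ← ENNReal.ofReal_add (mul_nonneg ha (by linarith)) (mul_nonneg hb (by linarith))]
  simp only [smul_eq_mul]
  ring_nf

section LineSlice

variable {F : Type*} [AddCommGroup F] [Module ℝ F] {v : F}

/-- The set of parameters `s` at which the line `s ↦ x + s v` is in `K`. -/
def lineSlice (K : Set F) (v x : F) : Set ℝ := {s | x + s • v ∈ K}

theorem smul_lineSlice_add_smul_lineSlice_subset {K : Set F} (hK : Convex ℝ K) (x y : F) {a b : ℝ}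
    (ha : 0 ≤ a) (hb : 0 ≤ b) (hab : a + b = 1) :
    a • lineSlice K v x + b • lineSlice K v y ⊆ lineSlice K v (a • x + b • y) := by
  rintro _ ⟨_, ⟨s, hs, rfl⟩, _, ⟨r, hr, rfl⟩, rfl⟩
  have h := hK hs hr ha hb hab
  rwa [show a • (x + s • v) + b • (y + r • v) = a • x + b • y + (a • s + b • r) • v by module] at h

theorem convex_lineSlice {K : Set F} (hK : Convex ℝ K) (x : F) : Convex ℝ (lineSlice K v x) := by
  refine convex_iff_pointwise_add_subset.2 fun a b ha hb hab ↦ ?_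
  simpa only [Convex.combo_self hab] using
    smul_lineSlice_add_smul_lineSlice_subset hK x x ha hb hab

end LineSlice

section LineSliceMeasure

variable {F : Type*} [NormedAddCommGroup F] [NormedSpace ℝ F] {v : F}

theorem isCompact_lineSlice {K : Set F} (hK : IsCompact K) (hv : v ≠ 0) (x : F) :
    IsCompact (lineSlice K v x) :=
  ((Homeomorph.addLeft x).isClosedEmbedding.comp (isClosedEmbedding_smul_left hv)
    ).isCompact_preimage hK

variable [FiniteDimensional ℝ F] [MeasurableSpace F] [BorelSpace F] {μ : Measure F}

theorem measurable_volume_lineSlice {K : Set F} (hK : MeasurableSet K) :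
    Measurable fun x ↦ volume (lineSlice K v x) := by
  have hline : Measurable fun q : F × ℝ ↦ q.1 + q.2 • v := by fun_prop
  exact measurable_measure_prodMk_left (hline hK)

variable [μ.IsAddHaarMeasure]

-- Insert `∫ s, χ (φ x - s) = 1`, with `χ` the indicator of `[0, 1]`, and translate `x` by `s • v`.
theorem lintegral_eq_lintegral_slab_lintegral_line {φ : F →L[ℝ] ℝ} (hφ : φ v = 1)
    {f : F → ENNReal} (hf : Measurable f) :
    ∫⁻ x, f x ∂μ = ∫⁻ x in φ ⁻¹' Icc 0 1, (∫⁻ s : ℝ, f (x + s • v)) ∂μ := by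
  let χ : ℝ → ENNReal := (Icc (0 : ℝ) 1).indicator 1
  have hχ : Measurable χ := measurable_one.indicator measurableSet_Icc
  have hχ_sub (r : ℝ) : ∫⁻ s, χ (r - s) = 1 := by
    rw [lintegral_sub_left_eq_self χ, lintegral_indicator_one measurableSet_Icc]
    simp
  calc ∫⁻ x, f x ∂μ = ∫⁻ x, (∫⁻ s, χ (φ x - s) * f x) ∂μ := by
        refine lintegral_congr fun x ↦ ?_
        rw [lintegral_mul_const _ (by fun_prop), hχ_sub, one_mul]
    _ = ∫⁻ s, ∫⁻ x, χ (φ x - s) * f x ∂μ := lintegral_lintegral_swap (by fun_prop)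
    _ = ∫⁻ s, ∫⁻ x, χ (φ x) * f (x + s • v) ∂μ := by
        refine lintegral_congr fun s ↦ ?_
        rw [← lintegral_add_right_eq_self (fun x ↦ χ (φ x - s) * f x) (s • v)]
        simp [hφ]
    _ = ∫⁻ x, (∫⁻ s, χ (φ x) * f (x + s • v)) ∂μ := lintegral_lintegral_swap (by fun_prop)
    _ = ∫⁻ x in φ ⁻¹' Icc 0 1, (∫⁻ s : ℝ, f (x + s • v)) ∂μ := by
        rw [← lintegral_indicator (φ.measurable measurableSet_Icc)]
        refine lintegral_congr fun x ↦ ?_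
        rw [lintegral_const_mul _ (by fun_prop)]
        by_cases hx : φ x ∈ Icc (0 : ℝ) 1 <;> simp [χ, hx]

theorem measure_eq_lintegral_volume_lineSlice {φ : F →L[ℝ] ℝ} (hφ : φ v = 1) {K : Set F}
    (hK : MeasurableSet K) :
    μ K = ∫⁻ x in φ ⁻¹' Icc 0 1, volume (lineSlice K v x) ∂μ := by
  rw [← lintegral_indicator_one hK,
    lintegral_eq_lintegral_slab_lintegral_line hφ (measurable_one.indicator hK)]
  refine lintegral_congr fun x ↦ ?_
  have hline : Measurable fun s : ℝ ↦ x + s • v := by fun_prop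
  exact lintegral_indicator_one (hline hK)

end LineSliceMeasure

/-! ### Symmetric polytopes -/

section SymPolytope

variable {F : Type*} [AddCommGroup F] [Module ℝ F] {ι : Type*} [Fintype ι]

/-- The symmetric polytope `conv {±xᵢ}`, encoded as the image of the cross polytope so that families
of such polytopes are parametrized by a fixed set. It is `{0}` when `ι` is empty. -/
def symPolytope (x : ι → F) : Set F :=
  Fintype.linearCombination ℝ x '' {a | ∑ i, |a i| ≤ 1}

theorem absConvex_symPolytope (x : ι → F) : AbsConvex ℝ (symPolytope x) := by
  constructor
  · rintro r hr _ ⟨_, ⟨a, ha, rfl⟩, rfl⟩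
    refine ⟨r • a, ?_, map_smul _ r a⟩
    calc ∑ i, |r * a i| = |r| * ∑ i, |a i| := by simp only [abs_mul, Finset.mul_sum]
      _ ≤ 1 := mul_le_one₀ hr (Finset.sum_nonneg fun i _ ↦ abs_nonneg _) ha
  · refine Convex.linear_image ?_ _
    intro a ha b hb s t hs ht hst
    calc ∑ i, |s * a i + t * b i| ≤ ∑ i, (s * |a i| + t * |b i|) := by
          gcongr with i
          refine (abs_add_le _ _).trans_eq ?_
          rw [abs_mul, abs_mul, abs_of_nonneg hs, abs_of_nonneg ht]
      _ = s * ∑ i, |a i| + t * ∑ i, |b i| := by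
          rw [Finset.sum_add_distrib, Finset.mul_sum, Finset.mul_sum]
      _ ≤ s * 1 + t * 1 := by gcongr <;> assumption
      _ = 1 := by simpa using hst

theorem sum_smul_mem_of_absConvex {s : Set F} (hs : AbsConvex ℝ s) (hs_ne : s.Nonempty)
    {x : ι → F} (hx : ∀ i, x i ∈ s) {a : ι → ℝ} (ha : ∑ i, |a i| ≤ 1) :
    ∑ i, a i • x i ∈ s := by
  let w : Option ι → ℝ := fun o ↦ o.elim (1 - ∑ i, |a i|) fun i ↦ |a i|
  let z : Option ι → F := fun o ↦ o.elim 0 fun i ↦ (SignType.sign (a i) : ℝ) • x i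
  have hw (o) : 0 ≤ w o := by cases o <;> simp [w, ha]
  have hz (o) : z o ∈ s := by
    cases o with
    | none => exact hs.1.zero_mem hs_ne
    | some i =>
      refine hs.1.smul_mem ?_ (hx i)
      rcases lt_trichotomy (a i) 0 with h | h | h <;> simp [h]
  have h := hs.2.sum_mem (t := .univ) (fun o _ ↦ hw o) (by simp [w]) fun o _ ↦ hz o
  simpa [w, z, smul_smul, abs_mul_sign] using h

theorem symPolytope_subset {s : Set F} (hs : AbsConvex ℝ s) (hs_ne : s.Nonempty) {x : ι → F}
    (hx : ∀ i, x i ∈ s) : symPolytope x ⊆ s := by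
  rintro _ ⟨a, ha, rfl⟩
  exact sum_smul_mem_of_absConvex hs hs_ne hx ha

theorem mem_symPolytope_self (x : ι → F) (i : ι) : x i ∈ symPolytope x := by
  classical
  refine ⟨Pi.single i 1, ?_, by simp [Fintype.linearCombination_apply_single]⟩
  simp [Pi.single_apply, apply_ite abs]

theorem convexHull_range_union_neg_range [Nonempty ι] (x : ι → F) :
    convexHull ℝ (range x ∪ -range x) = symPolytope x := by
  rw [convexHull_union_neg_eq_absConvexHull]
  refine (absConvexHull_min ?_ (absConvex_symPolytope x)).antisymm ?_
  · exact range_subset_iff.2 (mem_symPolytope_self x)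
  · exact symPolytope_subset absConvex_absConvexHull
      (absConvexHull_nonempty.2 (range_nonempty x)) fun i ↦ subset_absConvexHull (mem_range_self i)

theorem symPolytope_nonempty (x : ι → F) : (symPolytope x).Nonempty :=
  ⟨0, 0, by simp, by simp⟩

theorem symPolytope_comp_subset {κ : Type*} [Fintype κ] (x : ι → F) (e : κ → ι) :
    symPolytope (x ∘ e) ⊆ symPolytope x :=
  symPolytope_subset (absConvex_symPolytope x) (symPolytope_nonempty x)
    fun k ↦ mem_symPolytope_self x (e k)

theorem image_symPolytope {G : Type*} [AddCommGroup G] [Module ℝ G] (f : F →ₗ[ℝ] G) (x : ι → F) :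
    f '' symPolytope x = symPolytope (f ∘ x) := by
  have h_comp : f ∘ₗ Fintype.linearCombination ℝ x = Fintype.linearCombination ℝ (f ∘ x) := by
    ext; simp [Fintype.linearCombination_apply]
  rw [symPolytope, symPolytope, ← h_comp, LinearMap.coe_comp, image_comp]

theorem symPolytope_subset_span (x : ι → F) :
    symPolytope x ⊆ (Submodule.span ℝ (range x) : Set F) := by
  rintro _ ⟨a, -, rfl⟩
  rw [← Fintype.range_linearCombination]
  exact LinearMap.mem_range_self _ a

theorem lineSlice_symPolytope_add_smul_subset (x : ι → F) (c : ι → ℝ) (v y : F) (t₁ t₂ : ℝ)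
    {a b : ℝ} (hab : a + b = 1) :
    lineSlice (symPolytope fun i ↦ x i + ((a * t₁ + b * t₂) * c i) • v) v y ⊆
      a • lineSlice (symPolytope fun i ↦ x i + (t₁ * c i) • v) v y +
        b • lineSlice (symPolytope fun i ↦ x i + (t₂ * c i) • v) v y := by
  rintro s ⟨l, hl, hls⟩
  set t := a * t₁ + b * t₂ with ht
  let C : ℝ := ∑ i, l i * c i
  have h_comb (r : ℝ) : Fintype.linearCombination ℝ (fun i ↦ x i + (r * c i) • v) l =
      ∑ i, l i • x i + (r * C) • v := by
    simp only [C, Fintype.linearCombination_apply, smul_add, Finset.sum_add_distrib,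
      Finset.mul_sum, Finset.sum_smul, smul_smul, mul_left_comm]
  have h_mem (r : ℝ) : s + (r - t) * C ∈
      lineSlice (symPolytope fun i ↦ x i + (r * c i) • v) v y := by
    refine ⟨l, hl, ?_⟩
    rw [h_comb, ← eq_sub_iff_add_eq] at hls
    rw [h_comb, hls]
    module
  refine ⟨_, smul_mem_smul_set (h_mem t₁), _, smul_mem_smul_set (h_mem t₂), ?_⟩
  simp only [smul_eq_mul]
  linear_combination (s - t * C) * hab - C * ht

end SymPolytope

section SymPolytopeMeasure

variable {F : Type*} [NormedAddCommGroup F] [NormedSpace ℝ F] {ι : Type*} [Fintype ι]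

theorem isCompact_symPolytope (x : ι → F) : IsCompact (symPolytope x) := by
  refine IsCompact.image ?_ (LinearMap.continuous_of_finiteDimensional _)
  refine Metric.isCompact_of_isClosed_isBounded (isClosed_le (by fun_prop) continuous_const)
    (Metric.isBounded_closedBall (x := (0 : ι → ℝ)) (r := 1) |>.subset fun a ha ↦ ?_)
  rw [mem_closedBall_zero_iff, pi_norm_le_iff_of_nonneg zero_le_one]
  exact fun i ↦ (Finset.single_le_sum (fun j _ ↦ abs_nonneg (a j)) (Finset.mem_univ i)).trans ha

theorem volume_lineSlice_symPolytope_add_smul_le (x : ι → F) (c : ι → ℝ) {v : F} (hv : v ≠ 0)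
    (y : F) (t₁ t₂ : ℝ) {a b : ℝ} (ha : 0 ≤ a) (hb : 0 ≤ b) (hab : a + b = 1) :
    volume (lineSlice (symPolytope fun i ↦ x i + ((a * t₁ + b * t₂) * c i) • v) v y) ≤
      ENNReal.ofReal a * volume (lineSlice (symPolytope fun i ↦ x i + (t₁ * c i) • v) v y) +
        ENNReal.ofReal b * volume (lineSlice (symPolytope fun i ↦ x i + (t₂ * c i) • v) v y) := by
  have h_sub := lineSlice_symPolytope_add_smul_subset x c v y t₁ t₂ hab
  have h_compact (x : ι → F) : IsCompact (lineSlice (symPolytope x) v y) :=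
    isCompact_lineSlice (isCompact_symPolytope x) hv y
  have h_convex (x : ι → F) : Convex ℝ (lineSlice (symPolytope x) v y) :=
    convex_lineSlice (absConvex_symPolytope x).2 y
  obtain h_empty | ⟨s, hs⟩ := eq_empty_or_nonempty
    (lineSlice (symPolytope fun i ↦ x i + ((a * t₁ + b * t₂) * c i) • v) v y)
  · simp [h_empty]
  · obtain ⟨_, ⟨s₁, hs₁, rfl⟩, _, ⟨s₂, hs₂, rfl⟩, -⟩ := h_sub hs
    exact (measure_mono h_sub).trans_eq <| volume_smul_add_smul (h_compact _) (h_convex _)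
      ⟨s₁, hs₁⟩ (h_compact _) (h_convex _) ⟨s₂, hs₂⟩ ha hb

theorem symPolytope_subset_cthickening (x y : ι → F) :
    symPolytope y ⊆ Metric.cthickening (dist y x) (symPolytope x) := by
  rintro _ ⟨a, ha, rfl⟩
  refine Metric.mem_cthickening_of_dist_le _ _ _ _ (mem_image_of_mem _ ha) ?_
  simp only [Fintype.linearCombination_apply]
  calc dist (∑ i, a i • y i) (∑ i, a i • x i) ≤ ∑ i, |a i| * dist y x := by
        refine dist_sum_sum_le_of_le _ fun i _ ↦ ?_
        rw [dist_smul₀, Real.norm_eq_abs]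
        gcongr
        exact dist_le_pi_dist y x i
    _ = (∑ i, |a i|) * dist y x := (Finset.sum_mul ..).symm
    _ ≤ dist y x := mul_le_of_le_one_left dist_nonneg ha

variable [FiniteDimensional ℝ F] [MeasurableSpace F] [BorelSpace F] (μ : Measure F)
  [μ.IsAddHaarMeasure]

theorem upperSemicontinuous_measure_symPolytope :
    UpperSemicontinuous fun x : ι → F ↦ μ (symPolytope x) := by
  intro x c hc
  have h_dist : Filter.Tendsto (fun y ↦ dist y x) (nhds x) (nhds 0) := by
    simpa using (continuous_id.dist continuous_const).tendsto (f := fun y ↦ dist y x) x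
  have h := (tendsto_measure_cthickening_of_isCompact (μ := μ)
    (isCompact_symPolytope x)).comp h_dist
  filter_upwards [h.eventually_lt_const hc] with y hy
  exact (measure_mono (symPolytope_subset_cthickening x y)).trans_lt hy

theorem measure_symPolytope_eq_zero_iff {x : ι → F} :
    μ (symPolytope x) = 0 ↔ Submodule.span ℝ (range x) ≠ ⊤ := by
  refine ⟨fun h h_top ↦ ?_, fun h ↦ ?_⟩
  · have h_open : IsOpenMap (Fintype.linearCombination ℝ x) :=
      LinearMap.isOpenMap_of_finiteDimensional _
        (LinearMap.range_eq_top.1 (by rw [Fintype.range_linearCombination, h_top]))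
    have h_cross : IsOpen {a : ι → ℝ | ∑ i, |a i| < 1} := isOpen_lt (by fun_prop) continuous_const
    refine (h_open _ h_cross).measure_ne_zero μ ⟨0, 0, by simp, by simp⟩
      (measure_mono_null (image_mono fun a ha ↦ ?_) h)
    exact le_of_lt (show ∑ i, |a i| < 1 from ha)
  · exact measure_mono_null (symPolytope_subset_span x) (Measure.addHaar_submodule μ _ h)

theorem continuous_measureReal_symPolytope_of_basis (b : Module.Basis ι ℝ F) :
    Continuous fun x : ι → F ↦ μ.real (symPolytope x) := by
  let f (x : ι → F) : F →L[ℝ] F := ∑ i, (b.coord i).toContinuousLinearMap.smulRight (x i)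
  have hf : Continuous f := by fun_prop
  have h_eq (x : ι → F) : μ.real (symPolytope x) = |(f x).det| * μ.real (symPolytope b) := by
    classical
    have h_comp : f x ∘ b = x := by
      ext i
      simp [f, Finsupp.single_apply]
    conv_lhs => rw [← h_comp]
    have h_image : symPolytope (f x ∘ b) = f x '' symPolytope b :=
      (image_symPolytope (f x : F →ₗ[ℝ] F) b).symm
    rw [h_image, measureReal_def, Measure.addHaar_image_continuousLinearMap, ENNReal.toReal_mul,
      ENNReal.toReal_ofReal (abs_nonneg _), measureReal_def]
  rw [funext h_eq]
  exact (ContinuousLinearMap.continuous_det.comp hf).abs.mul_const _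

theorem exists_pos_eventually_lt_measureReal_symPolytope {x : ι → F}
    (hx : Submodule.span ℝ (range x) = ⊤) :
    ∃ δ > 0, ∀ᶠ y in nhds x, δ < μ.real (symPolytope y) := by
  obtain ⟨κ, e, he, h_span, h_indep⟩ := exists_linearIndependent' ℝ x
  have : Finite κ := .of_injective e he
  have := Fintype.ofFinite κ
  rw [hx] at h_span
  have h_cont := (continuous_measureReal_symPolytope_of_basis μ (.mk h_indep h_span.ge)).comp
    (show Continuous fun y : ι → F ↦ y ∘ e by fun_prop)
  have h_pos : 0 < μ.real (symPolytope (x ∘ e)) :=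
    ENNReal.toReal_pos (mt (measure_symPolytope_eq_zero_iff μ).1 (not_not.2 h_span))
      (isCompact_symPolytope _).measure_ne_top
  obtain ⟨δ, hδ, hδx⟩ := exists_between h_pos
  refine ⟨δ, hδ, ?_⟩
  filter_upwards [h_cont.tendsto x |>.eventually_const_lt hδx] with y hy
  exact hy.trans_le (measureReal_mono (symPolytope_comp_subset y e)
    (isCompact_symPolytope y).measure_ne_top)

-- Rogers–Shephard: every line parallel to `v` meets the moving polytope in a segment whose length
-- is convex in `t`.
theorem convexOn_measureReal_symPolytope_add_smul (x : ι → F) (c : ι → ℝ) (v : F) :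
    ConvexOn ℝ univ fun t : ℝ ↦ μ.real (symPolytope fun i ↦ x i + (t * c i) • v) := by
  obtain rfl | hv := eq_or_ne v 0
  · simpa using convexOn_const _ convex_univ
  refine ⟨convex_univ, fun t₁ _ t₂ _ a b ha hb hab ↦ ?_⟩
  obtain ⟨φ, hφ⟩ := SeparatingDual.exists_eq_one (R := ℝ) hv
  have h_measurable (x : ι → F) : MeasurableSet (symPolytope x) :=
    (isCompact_symPolytope x).isClosed.measurableSet
  have h_ne_top (r : ℝ) (x : ι → F) : ENNReal.ofReal r * μ (symPolytope x) ≠ ⊤ :=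
    ENNReal.mul_ne_top ENNReal.ofReal_ne_top (isCompact_symPolytope x).measure_ne_top
  have h_le : μ (symPolytope fun i ↦ x i + ((a * t₁ + b * t₂) * c i) • v) ≤
      ENNReal.ofReal a * μ (symPolytope fun i ↦ x i + (t₁ * c i) • v) +
        ENNReal.ofReal b * μ (symPolytope fun i ↦ x i + (t₂ * c i) • v) := by
    simp only [measure_eq_lintegral_volume_lineSlice hφ (h_measurable _)]
    rw [← lintegral_const_mul _ (measurable_volume_lineSlice (h_measurable _)),
      ← lintegral_const_mul _ (measurable_volume_lineSlice (h_measurable _)),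
      ← lintegral_add_left ((measurable_volume_lineSlice (h_measurable _)).const_mul _)]
    exact lintegral_mono fun y ↦ volume_lineSlice_symPolytope_add_smul_le x c hv y t₁ t₂ ha hb hab
  refine (ENNReal.toReal_mono (ENNReal.add_ne_top.2 ⟨h_ne_top _ _, h_ne_top _ _⟩) h_le).trans_eq ?_
  rw [ENNReal.toReal_add (h_ne_top _ _) (h_ne_top _ _), ENNReal.toReal_mul, ENNReal.toReal_mul,
    ENNReal.toReal_ofReal ha, ENNReal.toReal_ofReal hb]
  rfl

end SymPolytopeMeasure

/-! ### Shears and linear spans -/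

section Shear

variable {F : Type*} [AddCommGroup F] [Module ℝ F] {v : F} {c : F → ℝ}

/-- `c` is constant along every line parallel to `v`, i.e. `c` is a function of the projection
along `v`. -/
def LineInvariant (v : F) (c : F → ℝ) : Prop := ∀ s : ℝ, Function.Periodic c (s • v)

/-- The shear `x ↦ x + c(x) v`; it translates each line parallel to `v` rigidly when `c` is
line-invariant, and then it underlies a Rogers–Shephard movement. -/
def shear (v : F) (c : F → ℝ) (x : F) : F := x + c x • v

theorem eq_top_of_shear_mem {H S : Submodule ℝ F} (hH : IsCompl H (Submodule.span ℝ {v}))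
    {κ : Type*} (b : Module.Basis κ ℝ H) (hbS : ∀ i, shear v c (b i) ∈ S) {ℓ : F →ₗ[ℝ] ℝ}
    (hℓ : ∀ i, ℓ (b i) = c (b i)) {u : F} (hu : u ∈ H) (huS : shear v c u ∈ S) (huℓ : c u ≠ ℓ u) :
    S = ⊤ := by
  have h_graph {h : F} (hh : h ∈ H) : h + ℓ h • v ∈ S := by
    let T : F →ₗ[ℝ] F := LinearMap.id + ℓ.smulRight v
    have h_top : ⊤ ≤ S.comap (T ∘ₗ H.subtype) := by
      rw [← b.span_eq, Submodule.span_le, range_subset_iff]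
      exact fun i ↦ by simpa [T, shear, hℓ] using hbS i
    simpa [T] using h_top (Submodule.mem_top (x := ⟨h, hh⟩))
  have hvS : v ∈ S := by
    refine (S.smul_mem_iff (sub_ne_zero.2 huℓ)).1 ?_
    simpa [shear, sub_smul] using S.sub_mem huS (h_graph hu)
  rw [← top_le_iff, ← hH.sup_eq_top, sup_le_iff, Submodule.span_singleton_le_iff_mem]
  exact ⟨fun h hh ↦ by simpa using S.sub_mem (h_graph hh) (S.smul_mem (ℓ h) hvS), hvS⟩

theorem exists_isCompl_span_singleton_mem {u v : F} (hu : u ∉ Submodule.span ℝ {v}) :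
    ∃ H : Submodule ℝ F, IsCompl H (Submodule.span ℝ {v}) ∧ u ∈ H := by
  obtain ⟨H, hH, h_compl⟩ := ((Submodule.disjoint_span_singleton_of_notMem hu).symm).exists_isCompl
  exact ⟨H, h_compl, (Submodule.span_singleton_le_iff_mem u H).1 hH⟩

end Shear

section Selection

variable {F : Type*} [AddCommGroup F] [Module ℝ F] [FiniteDimensional ℝ F] {ι : Type*} [Fintype ι]
  {v : F} {O : Set F} {c : F → ℝ}

theorem exists_basis_forall_mem_of_absorbent (hO : Absorbent ℝ O) (H : Submodule ℝ F) :
    ∃ b : Module.Basis (Fin (Module.finrank ℝ H)) ℝ H, ∀ i, (b i : F) ∈ O := by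
  let f := Module.finBasis ℝ H
  obtain ⟨δ, hδO, hδ⟩ := ((hO.absorbs_finite (finite_range fun i ↦ (f i : F))
    ).eventually_nhdsNE_zero.and self_mem_nhdsWithin).exists
  exact ⟨f.unitsSMul fun _ ↦ Units.mk0 δ hδ, fun i ↦ by
    rw [Module.Basis.unitsSMul_apply]
    exact hδO (mem_range_self i)⟩

-- Let `ℓ` interpolate `c` on a basis `b` of `H` inside `O`. If `c u ≠ ℓ u` for some `u ∈ O ∩ H`,
-- then `b` and `u` span only `H`, but their shears span the whole space.
theorem exists_linearMap_eqOn_inter_of_isCompl (hv : v ≠ 0)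
    (hι : Module.finrank ℝ F ≤ Fintype.card ι) (hO : Absorbent ℝ O)
    (hc : ∀ y : ι → F, (∀ i, y i ∈ O) → Submodule.span ℝ (range y) ≠ ⊤ →
      Submodule.span ℝ (range (shear v c ∘ y)) ≠ ⊤)
    {H : Submodule ℝ F} (hH : IsCompl H (Submodule.span ℝ {v})) :
    ∃ ℓ : F →ₗ[ℝ] ℝ, EqOn c ℓ (O ∩ H) := by
  obtain ⟨b, hbO⟩ := exists_basis_forall_mem_of_absorbent hO H
  obtain ⟨ℓ, hℓ⟩ := LinearMap.exists_extend (b.constr ℝ fun i ↦ c (b i))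
  have hℓb (i) : ℓ (b i) = c (b i) := by simpa using LinearMap.congr_fun hℓ (b i)
  refine ⟨ℓ, fun u ⟨huO, huH⟩ ↦ by_contra fun hu ↦ ?_⟩
  have h_card : Module.finrank ℝ H + 1 = Module.finrank ℝ F := by
    rw [← Submodule.finrank_add_eq_of_isCompl hH, finrank_span_singleton hv]
  obtain ⟨e, he⟩ : ∃ e : ι → Option (Fin (Module.finrank ℝ H)), e.Surjective :=
    Function.exists_surjective_iff.2
      ⟨⟨fun _ ↦ none⟩, Function.Embedding.nonempty_of_card_le (by simpa [h_card])⟩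
  let y (i : ι) : F := (e i).elim u fun k ↦ b k
  have hy {p : F → Prop} (hpu : p u) (hpb : ∀ k, p (b k)) (i : ι) : p (y i) := by
    cases h : e i <;> simp [y, h, hpu, hpb]
  have hy_span : Submodule.span ℝ (range y) ≠ ⊤ := by
    have h_le : Submodule.span ℝ (range y) ≤ H :=
      Submodule.span_le.2 (range_subset_iff.2 (hy huH fun k ↦ (b k).2))
    rintro h_top
    rw [h_top, top_le_iff] at h_le
    exact hv (Submodule.span_singleton_eq_bot.1 (top_disjoint.1 (h_le ▸ hH.disjoint)))
  have h_shear_mem (o : Option (Fin (Module.finrank ℝ H))) :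
      shear v c (o.elim u fun k ↦ (b k : F)) ∈ Submodule.span ℝ (range (shear v c ∘ y)) := by
    obtain ⟨i, rfl⟩ := he o
    exact Submodule.subset_span (mem_range_self i)
  exact hc y (hy huO hbO) hy_span (eq_top_of_shear_mem hH b (fun k ↦ h_shear_mem (some k)) hℓb huH
    (h_shear_mem none) hu)

theorem apply_smul_of_span_shear_ne_top (hv : v ≠ 0)
    (hι : Module.finrank ℝ F ≤ Fintype.card ι) (hO : Absorbent ℝ O)
    (hc_line : LineInvariant v c)
    (hc : ∀ y : ι → F, (∀ i, y i ∈ O) → Submodule.span ℝ (range y) ≠ ⊤ →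
      Submodule.span ℝ (range (shear v c ∘ y)) ≠ ⊤)
    {u : F} {η : ℝ} (hu : u ∈ O) (hηu : η • u ∈ O) : c (η • u) = η * c u := by
  by_cases huv : u ∈ Submodule.span ℝ {v}
  · obtain ⟨s, rfl⟩ := Submodule.mem_span_singleton.1 huv
    obtain ⟨H, hH⟩ := (Submodule.span ℝ {v}).exists_isCompl
    obtain ⟨ℓ, hℓ⟩ := exists_linearMap_eqOn_inter_of_isCompl hv hι hO hc hH.symm
    have h0 : c 0 = 0 := by simpa using hℓ ⟨hO.zero_mem, H.zero_mem⟩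
    have h_line (r : ℝ) : c (r • v) = 0 := by simpa [h0] using hc_line r 0
    rw [smul_smul, h_line, h_line, mul_zero]
  · obtain ⟨H, hH, huH⟩ := exists_isCompl_span_singleton_mem huv
    obtain ⟨ℓ, hℓ⟩ := exists_linearMap_eqOn_inter_of_isCompl hv hι hO hc hH
    rw [hℓ ⟨hu, huH⟩, hℓ ⟨hηu, H.smul_mem η huH⟩, map_smul, smul_eq_mul]

theorem exists_linearMap_eqOn_of_span_shear_ne_top (hv : v ≠ 0)
    (hι : Module.finrank ℝ F ≤ Fintype.card ι) (hO : Absorbent ℝ O)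
    (hc_line : LineInvariant v c)
    (hc : ∀ y : ι → F, (∀ i, y i ∈ O) → Submodule.span ℝ (range y) ≠ ⊤ →
      Submodule.span ℝ (range (shear v c ∘ y)) ≠ ⊤) :
    ∃ ℓ : F →ₗ[ℝ] ℝ, ℓ v = 0 ∧ EqOn c ℓ O := by
  obtain ⟨H, hH⟩ := (Submodule.span ℝ {v}).exists_isCompl
  obtain ⟨ℓ, hℓ⟩ := exists_linearMap_eqOn_inter_of_isCompl hv hι hO hc hH.symm
  let P : F →ₗ[ℝ] F := H.projection (Submodule.span ℝ {v}) hH.symm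
  have hPv : P v = 0 := by simp [P, Submodule.projection_apply_eq_zero_iff]
  refine ⟨ℓ ∘ₗ P, by simp [hPv], fun u hu ↦ ?_⟩
  obtain ⟨s, hs⟩ := Submodule.mem_span_singleton.1 (Submodule.sub_projection_mem hH.symm u)
  obtain ⟨η, ⟨hηu, hηP⟩, hη⟩ := (((hO.eventually_nhdsNE_zero u).and
    (hO.eventually_nhdsNE_zero (P u))).and self_mem_nhdsWithin).exists
  refine mul_left_cancel₀ hη ?_
  calc η * c u = c (η • u) := (apply_smul_of_span_shear_ne_top hv hι hO hc_line hc hu hηu).symm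
    _ = c (η • P u + (η * s) • v) := by rw [mul_smul, ← smul_add, hs, add_sub_cancel]
    _ = c (η • P u) := hc_line _ _
    _ = η * ℓ (P u) := by
      rw [hℓ ⟨hηP, H.smul_mem η (Submodule.projection_apply_mem _ u)⟩, map_smul, smul_eq_mul]

end Selection

section ShearImage

variable {F : Type*} [AddCommGroup F] [Module ℝ F] {v : F} {c c' : F → ℝ}

theorem LineInvariant.smul (hc : LineInvariant v c) (r : ℝ) : LineInvariant v (r • c) :=
  fun s ↦ (hc s).smul r

theorem LineInvariant.neg (hc : LineInvariant v c) : LineInvariant v (-c) :=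
  fun s ↦ (hc s).comp Neg.neg

theorem LineInvariant.sub (hc : LineInvariant v c) (hc' : LineInvariant v c') :
    LineInvariant v (c - c') :=
  fun s ↦ (hc s).sub (hc' s)

theorem lineInvariant_linearMap {ℓ : F →ₗ[ℝ] ℝ} (hℓ : ℓ v = 0) : LineInvariant v ℓ :=
  fun s x ↦ by simp [hℓ]

theorem shear_shear (hc' : LineInvariant v c') (x : F) :
    shear v c' (shear v c x) = shear v (c + c') x := by
  simp only [shear, hc' (c x) x, Pi.add_apply, add_smul, add_assoc]

theorem shear_neg_shear (hc : LineInvariant v c) (x : F) : shear v (-c) (shear v c x) = x := by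
  rw [shear_shear hc.neg]
  simp [shear]

theorem shear_shear_neg (hc : LineInvariant v c) (x : F) : shear v c (shear v (-c) x) = x := by
  simpa using shear_neg_shear hc.neg x

theorem image_shear_eq_preimage (hc : LineInvariant v c) (K : Set F) :
    shear v c '' K = shear v (-c) ⁻¹' K :=
  congrFun (image_eq_preimage_of_inverse (shear_neg_shear hc) (shear_shear_neg hc)) K

theorem image_shear_neg_image_shear (hc : LineInvariant v c) (K : Set F) :
    shear v (-c) '' (shear v c '' K) = K := by
  simp only [image_image, shear_neg_shear hc, image_id']

theorem lineSlice_image_shear (hc : LineInvariant v c) (K : Set F) (x : F) :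
    lineSlice (shear v c '' K) v x = c x +ᵥ lineSlice K v x := by
  ext s
  rw [image_shear_eq_preimage hc, mem_vadd_set_iff_neg_vadd_mem]
  simp only [lineSlice, shear, mem_ofPred_eq, mem_preimage, Pi.neg_apply, hc s x, vadd_eq_add,
    add_smul, add_assoc, add_comm (s • v)]

end ShearImage

section Cylinder

variable {F : Type*} [AddCommGroup F] [Module ℝ F] {v : F} {c : F → ℝ}

/-- The union of all lines parallel to `v` that meet `K`. -/
def lineCylinder (K : Set F) (v : F) : Set F := {x | (lineSlice K v x).Nonempty}

theorem subset_lineCylinder (K : Set F) (v : F) : K ⊆ lineCylinder K v :=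
  fun x hx ↦ ⟨0, by simpa [lineSlice]⟩

theorem lineSlice_add_smul (K : Set F) (v x : F) (r : ℝ) :
    lineSlice K v (x + r • v) = -r +ᵥ lineSlice K v x := by
  ext s
  simp only [lineSlice, mem_vadd_set_iff_neg_vadd_mem, mem_ofPred_eq, vadd_eq_add, neg_neg,
    add_smul, add_assoc]

theorem add_smul_mem_lineCylinder_iff {K : Set F} {x : F} (r : ℝ) :
    x + r • v ∈ lineCylinder K v ↔ x ∈ lineCylinder K v := by
  simp only [lineCylinder, lineSlice_add_smul, mem_ofPred_eq, vadd_set_nonempty]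

theorem lineCylinder_image_shear (hc : LineInvariant v c) (K : Set F) :
    lineCylinder (shear v c '' K) v = lineCylinder K v := by
  simp only [lineCylinder, lineSlice_image_shear hc, vadd_set_nonempty]

theorem lineCylinder_mono {K L : Set F} (h : K ⊆ L) (v : F) : lineCylinder K v ⊆ lineCylinder L v :=
  fun _ hx ↦ hx.mono fun _ hs ↦ h hs

theorem convex_lineCylinder {K : Set F} (hK : Convex ℝ K) (v : F) : Convex ℝ (lineCylinder K v) :=
  fun x hx y hy _ _ ha hb hab ↦ (hx.smul_set.add hy.smul_set).mono
    (smul_lineSlice_add_smul_lineSlice_subset hK x y ha hb hab)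

theorem concaveOn_sSup_lineSlice {K : Set F} (hK : Convex ℝ K)
    (hK_bdd : ∀ x, BddAbove (lineSlice K v x)) :
    ConcaveOn ℝ (lineCylinder K v) fun x ↦ sSup (lineSlice K v x) := by
  refine ⟨convex_lineCylinder hK v, fun x hx y hy a b ha hb hab ↦ ?_⟩
  have hbdd (x : F) {a : ℝ} (ha : 0 ≤ a) : BddAbove (a • lineSlice K v x) :=
    (hK_bdd x).smul_of_nonneg ha
  rw [← Real.sSup_smul_of_nonneg ha, ← Real.sSup_smul_of_nonneg hb,
    ← csSup_add hx.smul_set (hbdd x ha) hy.smul_set (hbdd y hb)]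
  exact csSup_le_csSup (hK_bdd _) (hx.smul_set.add hy.smul_set)
    (smul_lineSlice_add_smul_lineSlice_subset hK x y ha hb hab)

end Cylinder

/-! ### Shears of convex bodies -/

section ShearTopology

variable {F : Type*} [NormedAddCommGroup F] [NormedSpace ℝ F] {K : Set F} {v : F} {c : F → ℝ}

theorem isOpen_lineCylinder (hK : IsOpen K) (v : F) : IsOpen (lineCylinder K v) := by
  have h_eq : lineCylinder K v = ⋃ s : ℝ, (fun x ↦ x + s • v) ⁻¹' K := by
    ext x
    simp [lineCylinder, lineSlice, Set.Nonempty]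
  rw [h_eq]
  exact isOpen_iUnion fun s ↦ hK.preimage (by fun_prop)

theorem lineCylinder_interior_subset (K : Set F) (v : F) :
    lineCylinder (interior K) v ⊆ interior (lineCylinder K v) :=
  interior_maximal (lineCylinder_mono interior_subset v) (isOpen_lineCylinder isOpen_interior v)

theorem image_shear_interior_subset (hc_line : LineInvariant v c)
    (hc : ContinuousOn c (interior (lineCylinder K v))) :
    shear v c '' interior K ⊆ interior (shear v c '' K) := by
  refine interior_maximal (image_mono interior_subset) ?_
  have h_eq : shear v c '' interior K =
      lineCylinder (interior K) v ∩ shear v (-c) ⁻¹' interior K := by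
    rw [← image_shear_eq_preimage hc_line, eq_comm, inter_eq_right,
      ← lineCylinder_image_shear hc_line]
    exact subset_lineCylinder _ v
  rw [h_eq]
  refine ContinuousOn.isOpen_inter_preimage ?_ (isOpen_lineCylinder isOpen_interior v)
    isOpen_interior
  exact continuousOn_id.add ((hc.mono (lineCylinder_interior_subset K v)).neg.smul
    continuousOn_const)

theorem interior_image_shear (hc_line : LineInvariant v c)
    (hc : ContinuousOn c (interior (lineCylinder K v))) :
    interior (shear v c '' K) = shear v c '' interior K := by
  refine Subset.antisymm ?_ (image_shear_interior_subset hc_line hc)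
  have h := image_shear_interior_subset (K := shear v c '' K) hc_line.neg
    (by rw [lineCylinder_image_shear hc_line]; exact hc.neg)
  rw [image_shear_neg_image_shear hc_line, image_shear_eq_preimage hc_line.neg, neg_neg] at h
  intro y hy
  refine ⟨shear v (-c) y, h ?_, shear_shear_neg hc_line y⟩
  rwa [mem_preimage, shear_shear_neg hc_line]

variable [FiniteDimensional ℝ F]

-- `c` is the difference of the concave functions whose graphs bound the two bodies from above.
theorem continuousOn_of_convex_image_shear (hK : IsCompact K) (hK_convex : Convex ℝ K) (hv : v ≠ 0)
    (hc_line : LineInvariant v c) (hc_convex : Convex ℝ (shear v c '' K)) :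
    ContinuousOn c (interior (lineCylinder K v)) := by
  have hK_bdd (x) : BddAbove (lineSlice K v x) := (isCompact_lineSlice hK hv x).bddAbove
  have h_slice := lineSlice_image_shear hc_line K
  have h_top := (concaveOn_sSup_lineSlice hK_convex hK_bdd).continuousOn_interior
  have h_top_image := (concaveOn_sSup_lineSlice hc_convex fun x ↦ by
    rw [h_slice x]
    exact ((isCompact_lineSlice hK hv x).vadd _).bddAbove).continuousOn_interior
  rw [lineCylinder_image_shear hc_line] at h_top_image
  refine (h_top_image.sub h_top).congr fun x hx ↦ ?_
  have hx_ne : (lineSlice K v x).Nonempty := interior_subset (s := lineCylinder K v) hx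
  have h_sSup : sSup (c x +ᵥ lineSlice K v x) = c x + sSup (lineSlice K v x) :=
    ((OrderIso.addLeft (c x)).map_csSup' hx_ne (hK_bdd x)).symm
  simp [h_slice, h_sSup]

-- The sheared body is contained in `K`, so translation by `c x` maps the compact slice of `K`
-- through `x` into itself.
theorem eqOn_zero_of_convex_image_shear (hK : IsCompact K) (hK_convex : Convex ℝ K)
    (hK_int : (interior K).Nonempty) (hv : v ≠ 0) (hc_line : LineInvariant v c)
    (hc_convex : Convex ℝ (shear v c '' K)) (hc : EqOn c 0 (interior K)) : EqOn c 0 K := by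
  have h_int : interior (shear v c '' K) = interior K := by
    rw [interior_image_shear hc_line
      (continuousOn_of_convex_image_shear hK hK_convex hv hc_line hc_convex)]
    refine (image_congr fun x hx ↦ ?_).trans (image_id _)
    simp [shear, hc hx]
  have h_sub : shear v c '' K ⊆ K := by
    calc shear v c '' K ⊆ closure (shear v c '' K) := subset_closure
      _ = closure (interior K) := by
        rw [← h_int, hc_convex.closure_interior_eq_closure_of_nonempty_interior (h_int ▸ hK_int)]
      _ ⊆ K := closure_minimal interior_subset hK.isClosed
  intro x hx
  have h_slice {s : ℝ} (hs : s ∈ lineSlice K v x) : c x + s ∈ lineSlice K v x := by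
    have h := vadd_mem_vadd_set (a := c x) hs
    rw [← lineSlice_image_shear hc_line] at h
    exact h_sub h
  have h_compact := isCompact_lineSlice hK hv x
  have h_ne : (lineSlice K v x).Nonempty := subset_lineCylinder K v hx
  obtain ⟨m, hm⟩ := h_compact.exists_isGreatest h_ne
  obtain ⟨l, hl⟩ := h_compact.exists_isLeast h_ne
  have h_le := hm.2 (h_slice hm.1)
  have h_ge := hl.2 (h_slice hl.1)
  exact le_antisymm (by simpa using h_le) (by simpa using h_ge)

theorem eqOn_of_convex_image_shear (hK : IsCompact K) (hK_convex : Convex ℝ K)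
    (hK_int : (interior K).Nonempty) (hv : v ≠ 0) (hc_line : LineInvariant v c)
    (hc_convex : Convex ℝ (shear v c '' K)) {ℓ : F →ₗ[ℝ] ℝ} (hℓ : ℓ v = 0)
    (hc : EqOn c ℓ (interior K)) : EqOn c ℓ K := by
  have hℓ_line : LineInvariant v ℓ := lineInvariant_linearMap hℓ
  have h_convex : Convex ℝ (shear v (c - ℓ) '' K) := by
    have h_image : shear v (c - ℓ) '' K =
        (LinearMap.id - ℓ.smulRight v : F →ₗ[ℝ] F) '' (shear v c '' K) := by
      rw [image_image]
      refine image_congr fun x _ ↦ ?_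
      simp [shear, hℓ, sub_smul, add_sub_assoc]
    rw [h_image]
    exact hc_convex.linear_image _
  intro x hx
  have h0 := eqOn_zero_of_convex_image_shear hK hK_convex hK_int hv (hc_line.sub hℓ_line) h_convex
    (fun y hy ↦ by simp [hc hy]) hx
  exact sub_eq_zero.1 h0

end ShearTopology

theorem isOpen_setOf_forall_mem {ι X : Type*} [Finite ι] [TopologicalSpace X] {s : Set X}
    (hs : IsOpen s) : IsOpen {x : ι → X | ∀ i, x i ∈ s} := by
  simpa only [pi, mem_univ, true_imp_iff] using isOpen_set_pi finite_univ fun (_ : ι) _ ↦ hs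

section ShearMeasure

variable {F : Type*} [NormedAddCommGroup F] [NormedSpace ℝ F] [MeasurableSpace F] [BorelSpace F]
  {K : Set F} {v : F} {c : F → ℝ}

theorem measurable_shear [SecondCountableTopology F] (v : F) (hc : Measurable c) :
    Measurable (shear v c) :=
  measurable_id.add (hc.smul_const v)

/-- `shear v c` as a measurable equivalence, with inverse `shear v (-c)`. -/
def shearMeasurableEquiv [SecondCountableTopology F] (hc : Measurable c)
    (hc_line : LineInvariant v c) : F ≃ᵐ F where
  toFun := shear v c
  invFun := shear v (-c)
  left_inv := shear_neg_shear hc_line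
  right_inv := shear_shear_neg hc_line
  measurable_toFun := measurable_shear v hc
  measurable_invFun := measurable_shear v hc.neg

theorem exists_measurable_lineInvariant_eqOn_interior (hc_line : LineInvariant v c)
    (hc : ContinuousOn c (interior (lineCylinder K v))) :
    ∃ b : F → ℝ, Measurable b ∧ LineInvariant v b ∧ EqOn b c (interior K) := by
  classical
  let U := lineCylinder (interior K) v
  refine ⟨U.indicator c, ?_, fun s x ↦ ?_, fun x hx ↦
    indicator_of_mem (subset_lineCylinder _ v hx) c⟩
  · have hU : IsOpen U := isOpen_lineCylinder isOpen_interior v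
    rw [← piecewise_eq_indicator]
    exact (hc.mono (lineCylinder_interior_subset K v)).measurable_piecewise continuousOn_const
      hU.measurableSet
  · simp only [indicator_apply, U, add_smul_mem_lineCylinder_iff, hc_line s x]

variable [FiniteDimensional ℝ F] {μ : Measure F} [μ.IsAddHaarMeasure] {ι : Type*} [Fintype ι]

theorem measurePreserving_shear (hc : Measurable c) (hc_line : LineInvariant v c) :
    MeasurePreserving (shear v c) μ μ := by
  obtain rfl | hv := eq_or_ne v 0
  · simpa [funext fun x ↦ (by simp [shear] : shear 0 c x = id x)] using MeasurePreserving.id μ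
  obtain ⟨φ, hφ⟩ := SeparatingDual.exists_eq_one (R := ℝ) hv
  have h_meas := measurable_shear v hc
  refine ⟨h_meas, Measure.ext fun K hK ↦ ?_⟩
  rw [Measure.map_apply h_meas hK, measure_eq_lintegral_volume_lineSlice hφ (h_meas hK),
    measure_eq_lintegral_volume_lineSlice hφ hK, ← neg_neg c, ← image_shear_eq_preimage hc_line.neg]
  simp only [lineSlice_image_shear hc_line.neg, measure_vadd]

theorem setIntegral_pi_image_shear (hc : Measurable c) (hc_line : LineInvariant v c) (D : Set F)
    (f : (ι → F) → ℝ) :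
    ∫ x in {x | ∀ i, x i ∈ shear v c '' D}, f x ∂(Measure.pi fun _ : ι ↦ μ) =
      ∫ x in {x | ∀ i, x i ∈ D}, f (shear v c ∘ x) ∂(Measure.pi fun _ : ι ↦ μ) := by
  let e := MeasurableEquiv.piCongrRight fun _ : ι ↦ shearMeasurableEquiv hc hc_line
  have he : MeasurePreserving e (Measure.pi fun _ : ι ↦ μ) (Measure.pi fun _ : ι ↦ μ) :=
    measurePreserving_pi _ _ fun _ ↦ measurePreserving_shear hc hc_line
  have h_pre : e ⁻¹' {x | ∀ i, x i ∈ shear v c '' D} = {x | ∀ i, x i ∈ D} := by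
    ext x
    exact forall_congr' fun i ↦ (shearMeasurableEquiv hc hc_line).injective.mem_set_image
  rw [← he.setIntegral_preimage_emb e.measurableEmbedding, h_pre]
  rfl

-- `c` need not be measurable on the boundary of the cylinder, but that part is negligible.
theorem setIntegral_pi_image_shear_of_convex (hc_line : LineInvariant v c)
    (hc : ContinuousOn c (interior (lineCylinder K v)))
    (hc_convex : Convex ℝ (shear v c '' K)) (f : (ι → F) → ℝ) :
    ∫ x in {x | ∀ i, x i ∈ shear v c '' K}, f x ∂(Measure.pi fun _ : ι ↦ μ) =
      ∫ x in {x | ∀ i, x i ∈ interior K}, f (shear v c ∘ x) ∂(Measure.pi fun _ : ι ↦ μ) := by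
  obtain ⟨b, hb, hb_line, hbc⟩ := exists_measurable_lineInvariant_eqOn_interior hc_line hc
  have h_eq {x} (hx : x ∈ interior K) : shear v b x = shear v c x := by simp [shear, hbc hx]
  have h_int : interior (shear v c '' K) = shear v b '' interior K := by
    rw [interior_image_shear hc_line hc, image_congr fun x hx ↦ h_eq hx]
  have h_ae : ({x | ∀ i, x i ∈ shear v c '' K} : Set (ι → F)) =ᵐ[Measure.pi fun _ : ι ↦ μ]
      {x | ∀ i, x i ∈ shear v b '' interior K} := by
    have h := Measure.ae_eq_set_pi (μ := fun _ : ι ↦ μ) (I := univ) fun _ _ ↦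
      (interior_ae_eq_of_null_frontier (hc_convex.addHaar_frontier μ)).symm
    simpa only [h_int, pi, mem_univ, true_imp_iff] using h
  rw [setIntegral_congr_set h_ae, setIntegral_pi_image_shear hb hb_line]
  refine setIntegral_congr_fun ?_ fun x hx ↦ ?_
  · exact (isOpen_setOf_forall_mem isOpen_interior).measurableSet
  · exact congrArg f (funext fun i ↦ h_eq (hx i))

theorem measure_image_shear (hK : Convex ℝ K) (hc_line : LineInvariant v c)
    (hc : ContinuousOn c (interior (lineCylinder K v))) (hc_convex : Convex ℝ (shear v c '' K)) :
    μ (shear v c '' K) = μ K := by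
  obtain ⟨b, hb, hb_line, hbc⟩ := exists_measurable_lineInvariant_eqOn_interior hc_line hc
  have h_int : interior (shear v c '' K) = shear v (-b) ⁻¹' interior K := by
    rw [interior_image_shear hc_line hc, ← image_shear_eq_preimage hb_line]
    exact image_congr fun x hx ↦ by simp [shear, hbc hx]
  have h_ae {K : Set F} (hK : Convex ℝ K) : μ (interior K) = μ K :=
    measure_congr (interior_ae_eq_of_null_frontier (hK.addHaar_frontier μ))
  rw [← h_ae hc_convex, h_int, (measurePreserving_shear hb.neg hb_line.neg).measure_preimage
    isOpen_interior.nullMeasurableSet, h_ae hK]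

end ShearMeasure

/-! ### Movements of symmetric convex bodies -/

section Movement

variable {F : Type*} [NormedAddCommGroup F] [NormedSpace ℝ F]

/-- The sets `K_t = shear v (t • γ) '' K`, `t ∈ I`, form an SRS-movement of the symmetric convex
body `K`. The speed `γ` is encoded as a line-invariant function on the whole space, rather than as
a function on the projection of `K` along `v`. -/
structure IsSRSMovement (K : Set F) (v : F) (γ : F → ℝ) (I : Set ℝ) : Prop where
  isCompact : IsCompact K
  convex : Convex ℝ K
  interior_nonempty : (interior K).Nonempty
  neg_mem : ∀ x ∈ K, -x ∈ K
  ne_zero : v ≠ 0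
  lineInvariant : LineInvariant v γ
  map_neg : ∀ x ∈ K, γ (-x) = -γ x
  convex_interval : Convex ℝ I
  convex_image : ∀ t ∈ I, Convex ℝ (shear v (t • γ) '' K)

theorem zero_mem_interior_of_convex_of_neg_mem {K : Set F} (hK : Convex ℝ K)
    (hK_int : (interior K).Nonempty) (hK_neg : ∀ x ∈ K, -x ∈ K) : (0 : F) ∈ interior K := by
  obtain ⟨x, hx⟩ := hK_int
  simpa using hK.openSegment_interior_self_subset_interior hx (hK_neg x (interior_subset hx))
    (midpoint_mem_openSegment x (-x))

namespace IsSRSMovement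

variable {K : Set F} {v : F} {γ : F → ℝ} {I : Set ℝ} {t t₁ : ℝ} {ι : Type*}

theorem neg_mem_image (h : IsSRSMovement K v γ I) :
    ∀ x ∈ shear v (t • γ) '' K, -x ∈ shear v (t • γ) '' K := by
  rintro _ ⟨x, hx, rfl⟩
  exact ⟨-x, h.neg_mem x hx, by simp [shear, h.map_neg x hx, add_comm]⟩

variable [FiniteDimensional ℝ F]

theorem continuousOn (h : IsSRSMovement K v γ I) (ht : t ∈ I) :
    ContinuousOn (t • γ) (interior (lineCylinder K v)) :=
  continuousOn_of_convex_image_shear h.isCompact h.convex h.ne_zero (h.lineInvariant.smul t)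
    (h.convex_image t ht)

theorem continuousOn_shear_comp (h : IsSRSMovement K v γ I) (ht : t ∈ I) :
    ContinuousOn (fun x : ι → F ↦ shear v (t • γ) ∘ x) {x | ∀ i, x i ∈ interior K} := by
  have h_cont : ContinuousOn (shear v (t • γ)) (interior K) :=
    continuousOn_id.add (((h.continuousOn ht).mono
      (interior_mono (subset_lineCylinder K v))).smul continuousOn_const)
  exact continuousOn_pi.2 fun i ↦ h_cont.comp (continuous_apply i).continuousOn fun x hx ↦ hx i

theorem interior_image (h : IsSRSMovement K v γ I) (ht : t ∈ I) :
    interior (shear v (t • γ) '' K) = shear v (t • γ) '' interior K :=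
  interior_image_shear (h.lineInvariant.smul t) (h.continuousOn ht)

theorem zero_mem_interior_image (h : IsSRSMovement K v γ I) (ht : t ∈ I) :
    (0 : F) ∈ interior (shear v (t • γ) '' K) :=
  zero_mem_interior_of_convex_of_neg_mem (h.convex_image t ht)
    (h.interior_image ht ▸ h.interior_nonempty.image _) h.neg_mem_image

theorem eqOn_of_eqOn_interior (h : IsSRSMovement K v γ I) (ht : t ∈ I) (ht0 : t ≠ 0)
    {ℓ : F →ₗ[ℝ] ℝ} (hℓ : ℓ v = 0) (hγ : EqOn γ ℓ (interior K)) : EqOn γ ℓ K := by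
  have h_smul : EqOn (t • γ) (t • ℓ : F →ₗ[ℝ] ℝ) K :=
    eqOn_of_convex_image_shear h.isCompact h.convex h.interior_nonempty h.ne_zero
      (h.lineInvariant.smul t) (h.convex_image t ht) (by simp [hℓ])
      fun x hx ↦ by simp [hγ hx]
  exact fun x hx ↦ mul_left_cancel₀ ht0 (h_smul hx)

theorem exists_span_ne_top_span_eq_top [Fintype ι] (h : IsSRSMovement K v γ I)
    (hι : Module.finrank ℝ F ≤ Fintype.card ι)
    (hγ : ¬∃ ℓ : F →ₗ[ℝ] ℝ, ℓ v = 0 ∧ EqOn γ ℓ K) (ht : t ∈ I) (ht₁ : t₁ ∈ I) (hne : t ≠ t₁) :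
    ∃ x : ι → F, (∀ i, x i ∈ interior K) ∧
      Submodule.span ℝ (range (shear v (t • γ) ∘ x)) ≠ ⊤ ∧
      Submodule.span ℝ (range (shear v (t₁ • γ) ∘ x)) = ⊤ := by
  by_contra! h_span
  have h_speed (x : F) : γ (shear v (t • γ) x) = γ x := h.lineInvariant _ _
  obtain ⟨ℓ, hℓ, hγℓ⟩ := exists_linearMap_eqOn_of_span_shear_ne_top (c := (t₁ - t) • γ) h.ne_zero hι
    (absorbent_nhds_zero (isOpen_interior.mem_nhds (h.zero_mem_interior_image ht)))
    (h.lineInvariant.smul _) fun y hy hy_span ↦ by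
      rw [h.interior_image ht] at hy
      choose x hx hxy using hy
      obtain rfl : shear v (t • γ) ∘ x = y := funext hxy
      have h_comp : shear v ((t₁ - t) • γ) ∘ shear v (t • γ) = shear v (t₁ • γ) := by
        ext x
        simp [shear_shear (h.lineInvariant.smul _), ← add_smul]
      rw [← Function.comp_assoc, h_comp]
      exact h_span x hx hy_span
  have h_int : EqOn γ ((t₁ - t)⁻¹ • ℓ : F →ₗ[ℝ] ℝ) (interior K) := fun x hx ↦ by
    have h_eq : (t₁ - t) * γ x = ℓ x := by
      have h_shear := hγℓ (h.interior_image ht ▸ mem_image_of_mem _ hx)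
      rw [Pi.smul_apply, h_speed] at h_shear
      simpa [shear, hℓ] using h_shear
    rw [LinearMap.smul_apply, ← h_eq, smul_eq_mul, inv_mul_cancel_left₀ (sub_ne_zero.2 hne.symm)]
  obtain ⟨s, hs, hs0⟩ : ∃ s ∈ I, s ≠ 0 := by
    by_contra! h0
    exact hne ((h0 t ht).trans (h0 t₁ ht₁).symm)
  exact hγ ⟨(t₁ - t)⁻¹ • ℓ, by simp [hℓ], h.eqOn_of_eqOn_interior hs hs0 (by simp [hℓ]) h_int⟩

end IsSRSMovement

end Movement

theorem integral_lt_integral_of_measure_setOf_lt_ne_zero {α : Type*} [MeasurableSpace α]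
    {μ : Measure α} {f g : α → ℝ} (hf : Integrable f μ) (hg : Integrable g μ) (hle : f ≤ g)
    (hlt : μ {x | f x < g x} ≠ 0) : ∫ x, f x ∂μ < ∫ x, g x ∂μ := by
  rw [← sub_pos, ← integral_sub hg hf,
    integral_pos_iff_support_of_nonneg (fun x ↦ sub_nonneg.2 (hle x)) (hg.sub hf)]
  exact pos_iff_ne_zero.2 (mt (measure_mono_null fun x hx ↦ (sub_pos.2 hx.out).ne') hlt)

theorem strictConvexOn_integral {V α : Type*} [AddCommGroup V] [Module ℝ V] [MeasurableSpace α]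
    {μ : Measure α} {I : Set V} {g : V → α → ℝ} (hI : Convex ℝ I)
    (hg_int : ∀ t ∈ I, Integrable (g t) μ) (hg_convex : ∀ x, ConvexOn ℝ I fun t ↦ g t x)
    (hg_strict : ∀ ⦃t₁⦄, t₁ ∈ I → ∀ ⦃t₂⦄, t₂ ∈ I → t₁ ≠ t₂ → ∀ ⦃a b : ℝ⦄, 0 < a → 0 < b →
      a + b = 1 → μ {x | g (a • t₁ + b • t₂) x < a * g t₁ x + b * g t₂ x} ≠ 0) :
    StrictConvexOn ℝ I fun t ↦ ∫ x, g t x ∂μ := by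
  refine ⟨hI, fun t₁ ht₁ t₂ ht₂ hne a b ha hb hab ↦ ?_⟩
  have h_int₁ := (hg_int t₁ ht₁).const_mul a
  have h_int₂ := (hg_int t₂ ht₂).const_mul b
  simp only [smul_eq_mul]
  rw [← integral_const_mul, ← integral_const_mul, ← integral_add h_int₁ h_int₂]
  refine integral_lt_integral_of_measure_setOf_lt_ne_zero
    (hg_int _ (hI ht₁ ht₂ ha.le hb.le hab)) (h_int₁.add h_int₂) (fun x ↦ ?_)
    (hg_strict ht₁ ht₂ hne ha hb hab)
  exact (hg_convex x).2 ht₁ ht₂ ha.le hb.le hab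

section PolytopeVolume

variable {F : Type*} [NormedAddCommGroup F] [NormedSpace ℝ F] [FiniteDimensional ℝ F]
  [MeasurableSpace F] [BorelSpace F] (μ : Measure F) [μ.IsAddHaarMeasure] {ι : Type*} [Fintype ι]

theorem measurable_measureReal_symPolytope : Measurable fun x : ι → F ↦ μ.real (symPolytope x) :=
  (upperSemicontinuous_measure_symPolytope μ).measurable.ennreal_toReal

theorem tendsto_measureReal_symPolytope_zero {x : ι → F}
    (hx : Submodule.span ℝ (range x) ≠ ⊤) :
    Filter.Tendsto (fun y ↦ μ.real (symPolytope y)) (nhds x) (nhds 0) := by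
  refine (ENNReal.tendsto_toReal_zero_iff fun y ↦ (isCompact_symPolytope y).measure_ne_top).2 ?_
  refine ENNReal.tendsto_nhds_zero.2 fun ε hε ↦ ?_
  have h_zero := (measure_symPolytope_eq_zero_iff μ).2 hx
  filter_upwards [upperSemicontinuous_measure_symPolytope μ x ε (h_zero.trans_lt hε)] with y hy
  exact hy.le

theorem convexOn_rpow_measureReal_symPolytope_shear (x : ι → F) (v : F) (γ : F → ℝ) {p : ℝ}
    (hp : 1 ≤ p) :
    ConvexOn ℝ univ fun t : ℝ ↦ μ.real (symPolytope (shear v (t • γ) ∘ x)) ^ p := by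
  refine ⟨convex_univ, fun t₁ _ t₂ _ a b ha hb hab ↦ ?_⟩
  have h_convex := (convexOn_measureReal_symPolytope_add_smul μ x (γ ∘ x) v).2 (mem_univ t₁)
    (mem_univ t₂) ha hb hab
  exact (Real.rpow_le_rpow measureReal_nonneg h_convex (by linarith)).trans
    ((convexOn_rpow hp).2 measureReal_nonneg measureReal_nonneg ha hb hab)

end PolytopeVolume

section MovementMeasure

namespace IsSRSMovement

variable {F : Type*} [NormedAddCommGroup F] [NormedSpace ℝ F] [FiniteDimensional ℝ F]
  [MeasurableSpace F] [BorelSpace F] {μ : Measure F} [μ.IsAddHaarMeasure] {K : Set F} {v : F}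
  {γ : F → ℝ} {I : Set ℝ} {t t₁ : ℝ} {ι : Type*} [Fintype ι]

theorem measure_image (h : IsSRSMovement K v γ I) (ht : t ∈ I) :
    μ (shear v (t • γ) '' K) = μ K :=
  measure_image_shear h.convex (h.lineInvariant.smul t) (h.continuousOn ht) (h.convex_image t ht)

theorem measureReal_symPolytope_shear_le [Nonempty ι] (h : IsSRSMovement K v γ I) (ht : t ∈ I)
    {x : ι → F} (hx : ∀ i, x i ∈ K) : μ.real (symPolytope (shear v (t • γ) ∘ x)) ≤ μ.real K := by
  have h_sub : symPolytope (shear v (t • γ) ∘ x) ⊆ shear v (t • γ) '' K := by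
    have h_range : range (shear v (t • γ) ∘ x) ⊆ shear v (t • γ) '' K :=
      range_subset_iff.2 fun i ↦ mem_image_of_mem _ (hx i)
    rw [← convexHull_range_union_neg_range]
    refine convexHull_min (union_subset h_range fun y hy ↦ ?_) (h.convex_image t ht)
    simpa using h.neg_mem_image (-y) (h_range hy)
  rw [measureReal_def, measureReal_def, ← h.measure_image (μ := μ) ht]
  exact ENNReal.toReal_mono (by simpa [h.measure_image ht] using h.isCompact.measure_ne_top)
    (measure_mono h_sub)

theorem integrableOn_rpow_measureReal_symPolytope [Nonempty ι] (h : IsSRSMovement K v γ I)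
    (ht : t ∈ I) {p : ℝ} (hp : 0 ≤ p) :
    IntegrableOn (fun x : ι → F ↦ μ.real (symPolytope (shear v (t • γ) ∘ x)) ^ p)
      {x | ∀ i, x i ∈ interior K} (Measure.pi fun _ ↦ μ) := by
  have h_meas : MeasurableSet {x : ι → F | ∀ i, x i ∈ interior K} :=
    (isOpen_setOf_forall_mem isOpen_interior).measurableSet
  refine IntegrableOn.of_bound (C := μ.real K ^ p) ?_ ?_ ?_
  · refine (measure_mono fun x hx ↦ ?_).trans_lt
      (isCompact_univ_pi fun _ : ι ↦ h.isCompact).measure_lt_top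
    exact fun i _ ↦ interior_subset (hx i)
  · exact (((measurable_measureReal_symPolytope μ).comp_aemeasurable
      ((h.continuousOn_shear_comp ht).aemeasurable h_meas)).pow_const p).aestronglyMeasurable
  · filter_upwards [ae_restrict_mem h_meas] with x hx
    rw [Real.norm_of_nonneg (by positivity)]
    exact Real.rpow_le_rpow measureReal_nonneg
      (h.measureReal_symPolytope_shear_le ht fun i ↦ interior_subset (hx i)) hp

-- Near a tuple whose polytope is flat at time `t` but solid at time `t₁`, the left side is close
-- to `0` while the right side is bounded below.
theorem measure_setOf_rpow_measureReal_symPolytope_lt_ne_zero (h : IsSRSMovement K v γ I)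
    (hι : Module.finrank ℝ F ≤ Fintype.card ι)
    (hγ : ¬∃ ℓ : F →ₗ[ℝ] ℝ, ℓ v = 0 ∧ EqOn γ ℓ K) (ht : t ∈ I) (ht₁ : t₁ ∈ I) (hne : t ≠ t₁)
    {p : ℝ} (hp : 0 < p) {a : ℝ} (ha : 0 < a) :
    (Measure.pi fun _ : ι ↦ μ).restrict {x | ∀ i, x i ∈ interior K}
      {x | μ.real (symPolytope (shear v (t • γ) ∘ x)) ^ p <
        a * μ.real (symPolytope (shear v (t₁ • γ) ∘ x)) ^ p} ≠ 0 := by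
  obtain ⟨x, hx, hx_flat, hx_solid⟩ := h.exists_span_ne_top_span_eq_top hι hγ ht ht₁ hne
  have h_open : IsOpen {x : ι → F | ∀ i, x i ∈ interior K} :=
    isOpen_setOf_forall_mem isOpen_interior
  have h_cont {r : ℝ} (hr : r ∈ I) := (h.continuousOn_shear_comp hr).continuousAt
    (h_open.mem_nhds hx)
  obtain ⟨δ, hδ, h_solid⟩ := exists_pos_eventually_lt_measureReal_symPolytope μ hx_solid
  have h_flat : Filter.Tendsto (fun y ↦ μ.real (symPolytope (shear v (t • γ) ∘ y)) ^ p)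
      (nhds x) (nhds 0) := by
    simpa [Real.zero_rpow hp.ne'] using ((tendsto_measureReal_symPolytope_zero μ hx_flat).comp
      (h_cont ht)).rpow_const (.inr hp.le)
  have h_lt : ∀ᶠ y in nhds x, μ.real (symPolytope (shear v (t • γ) ∘ y)) ^ p <
      a * μ.real (symPolytope (shear v (t₁ • γ) ∘ y)) ^ p := by
    filter_upwards [h_flat.eventually_lt_const (show 0 < a * δ ^ p by positivity),
      (h_cont ht₁).eventually h_solid] with y hy_flat hy_solid
    refine hy_flat.trans ?_
    gcongr
  rw [Measure.restrict_apply' h_open.measurableSet]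
  exact (Measure.measure_pos_of_mem_nhds _ (Filter.inter_mem h_lt (h_open.mem_nhds hx))).ne'

theorem strictConvexOn_setIntegral_rpow_measureReal_symPolytope [Nonempty ι]
    (h : IsSRSMovement K v γ I) (hι : Module.finrank ℝ F ≤ Fintype.card ι)
    (hγ : ¬∃ ℓ : F →ₗ[ℝ] ℝ, ℓ v = 0 ∧ EqOn γ ℓ K) {p : ℝ} (hp : 1 ≤ p) :
    StrictConvexOn ℝ I fun t ↦ ∫ x in {x : ι → F | ∀ i, x i ∈ interior K},
      μ.real (symPolytope (shear v (t • γ) ∘ x)) ^ p ∂(Measure.pi fun _ ↦ μ) := by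
  refine strictConvexOn_integral h.convex_interval
    (fun t ht ↦ h.integrableOn_rpow_measureReal_symPolytope ht (by linarith))
    (fun x ↦ (convexOn_rpow_measureReal_symPolytope_shear μ x v γ hp).subset (subset_univ I)
      h.convex_interval) fun t₁ ht₁ t₂ ht₂ hne a b ha hb hab ↦ ?_
  have hp0 : 0 < p := by linarith
  have ht := h.convex_interval ht₁ ht₂ ha.le hb.le hab
  have ht_ne : a • t₁ + b • t₂ ≠ t₁ := by
    intro h_eq
    have h_zero : b * (t₂ - t₁) = 0 := by
      linear_combination h_eq - t₁ * hab
    exact (mul_ne_zero hb.ne' (sub_ne_zero.2 hne.symm)) h_zero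
  refine fun h_null ↦ h.measure_setOf_rpow_measureReal_symPolytope_lt_ne_zero (μ := μ) hι hγ ht ht₁
    ht_ne hp0 ha (measure_mono_null ?_ h_null)
  exact fun x hx ↦ hx.out.trans_le (le_add_of_nonneg_right (by positivity))

end IsSRSMovement

end MovementMeasure

/-! ### Moments -/

section LinearSpeed

variable {F : Type*} [NormedAddCommGroup F] [NormedSpace ℝ F] [FiniteDimensional ℝ F]
  [MeasurableSpace F] [BorelSpace F] (μ : Measure F) [μ.IsAddHaarMeasure] {v : F}
  {ι : Type*} [Fintype ι]

theorem measure_symPolytope_shear_linearMap {ℓ : F →ₗ[ℝ] ℝ} (hℓ : ℓ v = 0) (x : ι → F) :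
    μ (symPolytope (shear v ℓ ∘ x)) = μ (symPolytope x) := by
  have h_line : LineInvariant v ℓ := lineInvariant_linearMap hℓ
  have h_meas : Measurable ℓ := ℓ.continuous_of_finiteDimensional.measurable
  have h_image : shear v ℓ '' symPolytope x = symPolytope (shear v ℓ ∘ x) :=
    image_symPolytope (.id + ℓ.smulRight v) x
  rw [← h_image, image_shear_eq_preimage h_line, (measurePreserving_shear h_meas.neg
    h_line.neg).measure_preimage (isCompact_symPolytope x).measurableSet.nullMeasurableSet]

theorem setIntegral_rpow_measureReal_symPolytope_shear_of_eqOn {K : Set F} {γ : F → ℝ}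
    {ℓ : F →ₗ[ℝ] ℝ} (hℓ : ℓ v = 0) (hγ : EqOn γ ℓ K) (t p : ℝ) :
    ∫ x in {x : ι → F | ∀ i, x i ∈ interior K},
        μ.real (symPolytope (shear v (t • γ) ∘ x)) ^ p ∂(Measure.pi fun _ ↦ μ) =
      ∫ x in {x : ι → F | ∀ i, x i ∈ interior K},
        μ.real (symPolytope x) ^ p ∂(Measure.pi fun _ ↦ μ) := by
  refine setIntegral_congr_fun (isOpen_setOf_forall_mem isOpen_interior).measurableSet
    fun x hx ↦ ?_
  have h_comp : shear v (t • γ) ∘ x = shear v (t • ℓ : F →ₗ[ℝ] ℝ) ∘ x := by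
    ext i
    simp [shear, hγ (interior_subset (hx i))]
  have h_smul : (t • ℓ : F →ₗ[ℝ] ℝ) v = 0 := by simp [hℓ]
  simp only [h_comp, measureReal_def, measure_symPolytope_shear_linearMap μ h_smul]

end LinearSpeed

theorem not_strictConvexOn_of_forall_eq {V : Type*} [AddCommGroup V] [Module ℝ V] {I : Set V}
    {f : V → ℝ} (hI : I.Nontrivial) (hf : ∀ s ∈ I, ∀ t ∈ I, f s = f t) :
    ¬StrictConvexOn ℝ I f := by
  intro h
  obtain ⟨s, hs, t, ht, hst⟩ := hI
  have h_mem := h.1 hs ht one_half_pos.le one_half_pos.le (add_halves 1)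
  have h_lt := h.2 hs ht hst one_half_pos one_half_pos (add_halves 1)
  rw [hf _ h_mem s hs, hf t ht s hs, ← add_smul, add_halves, one_smul] at h_lt
  exact h_lt.false

theorem strictConvexOn_div_const {V : Type*} [AddCommGroup V] [Module ℝ V] {I : Set V}
    {f : V → ℝ} (hf : StrictConvexOn ℝ I f) {r : ℝ} (hr : 0 < r) :
    StrictConvexOn ℝ I fun t ↦ f t / r := by
  refine ⟨hf.1, fun s hs t ht hst a b ha hb hab ↦ ?_⟩
  calc f (a • s + b • t) / r < (a • f s + b • f t) / r := by
        gcongr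
        exact hf.2 hs ht hst ha hb hab
    _ = a • (f s / r) + b • (f t / r) := by simp only [smul_eq_mul]; ring

section Moment

variable {n N : ℕ} {K : Set (EuclideanSpace ℝ (Fin n))} {v : EuclideanSpace ℝ (Fin n)}

namespace IsSRSMovement

variable {γ : EuclideanSpace ℝ (Fin n) → ℝ} {I : Set ℝ} {t p : ℝ}

theorem momentV_image [Nonempty (Fin N)] (h : IsSRSMovement K v γ I) (ht : t ∈ I) :
    momentV n N (shear v (t • γ) '' K) p =
      (∫ x : Fin N → EuclideanSpace ℝ (Fin n) in {x | ∀ i, x i ∈ interior K},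
        volume.real (symPolytope (shear v (t • γ) ∘ x)) ^ p) /
          (volume.real K ^ p * volume.real K ^ N) := by
  rw [momentV, h.measure_image ht, volume_pi, setIntegral_pi_image_shear_of_convex
    (h.lineInvariant.smul t) (h.continuousOn ht) (h.convex_image t ht)]
  simp only [convexHull_range_union_neg_range, ← measureReal_def,
    Real.div_rpow measureReal_nonneg measureReal_nonneg, integral_div, div_div]

theorem strictConvexOn_momentV_iff (h : IsSRSMovement K v γ I) (hI : I.Nontrivial) (hp : 1 ≤ p)
    (hN : n ≤ N) :
    StrictConvexOn ℝ I (fun t ↦ momentV n N (shear v (t • γ) '' K) p) ↔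
      ¬∃ ℓ : EuclideanSpace ℝ (Fin n) →ₗ[ℝ] ℝ, ℓ v = 0 ∧ EqOn γ ℓ K := by
  have : Nontrivial (EuclideanSpace ℝ (Fin n)) := ⟨v, 0, h.ne_zero⟩
  have hn : 0 < n := finrank_euclideanSpace_fin (𝕜 := ℝ) (n := n) ▸ Module.finrank_pos
  have : Nonempty (Fin N) := Fin.pos_iff_nonempty.1 (hn.trans_le hN)
  refine ⟨?_, fun hγ ↦ ?_⟩
  · rintro h_strict ⟨ℓ, hℓ, hγℓ⟩
    refine not_strictConvexOn_of_forall_eq hI (fun s hs t ht ↦ ?_) h_strict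
    simp only [h.momentV_image hs, h.momentV_image ht, volume_pi,
      setIntegral_rpow_measureReal_symPolytope_shear_of_eqOn volume hℓ hγℓ]
  · have hK_pos : 0 < volume.real K :=
      ENNReal.toReal_pos (Measure.measure_pos_of_nonempty_interior _ h.interior_nonempty).ne'
        h.isCompact.measure_ne_top
    exact (strictConvexOn_div_const (r := volume.real K ^ p * volume.real K ^ N)
      (h.strictConvexOn_setIntegral_rpow_measureReal_symPolytope (μ := volume) (ι := Fin N)
        (by simpa using hN) hγ hp) (by positivity)).congr fun t ht ↦ (h.momentV_image ht).symm

end IsSRSMovement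

end Moment

section Projection

variable {v : E}

theorem projPerp_neg (v x : E) : projPerp v (-x) = -projPerp v x := by
  simp only [projPerp, inner_neg_left, neg_div, neg_smul, neg_sub, sub_neg_eq_add]
  abel

theorem lineInvariant_comp_projPerp (hv : v ≠ 0) (β : E → ℝ) :
    LineInvariant v (β ∘ projPerp v) := fun s x ↦ by
  have h_inner : ⟪v, v⟫ ≠ 0 := inner_self_ne_zero.2 hv
  have h_proj : projPerp v (x + s • v) = projPerp v x := by
    simp only [projPerp, inner_add_left, inner_smul_left, RCLike.conj_to_real, add_div,
      mul_div_cancel_right₀ s h_inner, add_smul]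
    abel
  exact congrArg β h_proj

theorem RSFamily_eq_image_shear (K : Set E) (v : E) (β : E → ℝ) (t : ℝ) :
    RSFamily K v β t = shear v (t • (β ∘ projPerp v)) '' K :=
  rfl

theorem isSRSMovement_comp_projPerp {K : Set E} {β : E → ℝ} {I : Set ℝ} (hK : IsSymConvexBody K)
    (hv : v ≠ 0) (hβ : ∀ x ∈ projPerp v '' K, β (-x) = -β x) (hI : Convex ℝ I)
    (h_convex : ∀ t ∈ I, Convex ℝ (RSFamily K v β t)) :
    IsSRSMovement K v (β ∘ projPerp v) I where
  isCompact := hK.1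
  convex := hK.2.1
  interior_nonempty := hK.2.2.1
  neg_mem x hx := by
    rw [hK.2.2.2]
    simpa using hx
  ne_zero := hv
  lineInvariant := lineInvariant_comp_projPerp hv β
  map_neg x hx := by
    simpa [projPerp_neg] using hβ _ (mem_image_of_mem _ hx)
  convex_interval := hI
  convex_image := h_convex

theorem exists_linearMap_eqOn_image_projPerp_iff (hv : v ≠ 0) (K : Set E) (β : E → ℝ) :
    (∃ ℓ : E →ₗ[ℝ] ℝ, ∀ x ∈ projPerp v '' K, β x = ℓ x) ↔
      ∃ ℓ : E →ₗ[ℝ] ℝ, ℓ v = 0 ∧ EqOn (β ∘ projPerp v) ℓ K := by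
  constructor
  · rintro ⟨ℓ, hℓ⟩
    let P : E →ₗ[ℝ] E := .id - (⟪v, v⟫⁻¹ • innerₗ E v).smulRight v
    have hP (x : E) : P x = projPerp v x := by
      simp only [P, projPerp, LinearMap.sub_apply, LinearMap.id_apply, LinearMap.smulRight_apply,
        LinearMap.smul_apply, innerₗ_apply_apply, smul_eq_mul, real_inner_comm x v, div_eq_inv_mul]
    refine ⟨ℓ ∘ₗ P, ?_, fun x hx ↦ ?_⟩
    · simp only [LinearMap.comp_apply, hP, projPerp,
        div_self (inner_self_ne_zero (𝕜 := ℝ).2 hv), one_smul, sub_self, map_zero]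
    · rw [LinearMap.comp_apply, hP]
      exact hℓ _ (mem_image_of_mem _ hx)
  · rintro ⟨ℓ, hℓ, hβ⟩
    refine ⟨ℓ, forall_mem_image.2 fun x hx ↦ (hβ hx).trans ?_⟩
    simp [projPerp, hℓ]

end Projection

/-- Let `K_t`, `t` in a nondegenerate interval `I`, be an SRS-movement of a symmetric
convex body `K ⊆ ℝⁿ` with speed function `β`.  Then for every real `p ≥ 1` and integer
`N ≥ n`, the function `t ↦ 𝔼 V_{K_t, N}^p` is strictly convex on `I` if and only if `β`
is not the restriction of a linear functional. -/
theorem momentV_strictConvexOn_iff_of_SRSMovement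
    {n : ℕ} (K : Set (EuclideanSpace ℝ (Fin n))) (hK : IsSymConvexBody K)
    (v : EuclideanSpace ℝ (Fin n)) (hv : v ≠ 0) (β : EuclideanSpace ℝ (Fin n) → ℝ)
    (hβodd : ∀ x ∈ projPerp v '' K, β (-x) = -β x)
    (I : Set ℝ) (hI : Convex ℝ I) (h0I : (0 : ℝ) ∈ I)
    (hInd : ∃ a ∈ I, ∃ b ∈ I, a ≠ b)
    (hmove : ∀ t ∈ I, Convex ℝ (RSFamily K v β t))
    (p : ℝ) (hp : 1 ≤ p) (N : ℕ) (hN : n ≤ N) :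
    StrictConvexOn ℝ I (fun t => momentV n N (RSFamily K v β t) p) ↔
      ¬∃ ℓ : EuclideanSpace ℝ (Fin n) →ₗ[ℝ] ℝ, ∀ x ∈ projPerp v '' K, β x = ℓ x := by
  simp only [RSFamily_eq_image_shear, exists_linearMap_eqOn_image_projPerp_iff hv]
  have h_movement := isSRSMovement_comp_projPerp hK hv hβodd hI hmove
  exact h_movement.strictConvexOn_momentV_iff hInd hp hN
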